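/- Let a, b > 0 and let T : ℝ^m → ℝ^m be given by T(x) = [1 + a exp(−‖x‖²/b)]⁻¹ x. Then T is a bijection, its inverse is T⁻¹(y) = g(‖y‖) y/‖y‖ (with the convention g(‖y‖)y/‖y‖ = 0 for y = 0), where g : [0,∞) → [0,∞) is the inverse of the strictly increasing continuous bijection h(ξ) = ξ/(1 + a exp(−ξ²/b)) of [0,∞) onto itself; moreover T⁻¹ is continuously differentiable and ‖T⁻¹(y)‖ = g(‖y‖) for all y ∈ ℝ^m. -/

import Mathlib

open MeasureTheory Matrix Real Filter Topology ENNReal NNReal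

noncomputable section

/-- Euclidean norm of a finite tuple. -/
def enorm2 {ι : Type*} [Fintype ι] (v : ι → ℝ) : ℝ := Real.sqrt (∑ i, v i ^ 2)

/-- The `N(0, σ² I)` distribution on `ι → ℝ`, given by its Lebesgue density. -/
def gaussPi (ι : Type*) [Fintype ι] (σ2 : ℝ) : Measure (ι → ℝ) :=
  volume.withDensity fun x => ENNReal.ofReal
    ((2 * π * σ2) ^ (-(Fintype.card ι : ℝ) / 2) * Real.exp (-(enorm2 x) ^ 2 / (2 * σ2)))

/-- The Lebesgue density of the `N(0, σ² Q⁻¹)` distribution on `ι → ℝ`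
(for `Q` symmetric positive definite). -/
def gaussCovDens {ι : Type*} [Fintype ι] [DecidableEq ι] (σ2 : ℝ) (Q : Matrix ι ι ℝ)
    (x : ι → ℝ) : ℝ :=
  (2 * π * σ2) ^ (-(Fintype.card ι : ℝ) / 2) * Real.sqrt Q.det *
    Real.exp (-(x ⬝ᵥ Q.mulVec x) / (2 * σ2))

/-- The `N(0, σ² Q⁻¹)` distribution on `ι → ℝ` (for `Q` symmetric positive definite),
given by its Lebesgue density. -/
def gaussCov {ι : Type*} [Fintype ι] [DecidableEq ι] (σ2 : ℝ) (Q : Matrix ι ι ℝ) :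
    Measure (ι → ℝ) :=
  volume.withDensity fun x => ENNReal.ofReal (gaussCovDens σ2 Q x)

open Classical in
/-- Symmetric positive semidefinite square root (junk value `0` off the psd cone). -/
def msqrt {ι : Type*} [Fintype ι] [DecidableEq ι] (A : Matrix ι ι ℝ) : Matrix ι ι ℝ :=
  if h : A.PosSemidef then
    (h.1.eigenvectorUnitary : Matrix ι ι ℝ) * diagonal (Real.sqrt ∘ h.1.eigenvalues) *
      (star h.1.eigenvectorUnitary : Matrix ι ι ℝ)
  else 0

open Classical in
/-- Smallest eigenvalue of a symmetric matrix (junk value `0` otherwise). -/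
def lamMin {ι : Type*} [Fintype ι] [DecidableEq ι] (A : Matrix ι ι ℝ) : ℝ :=
  if h : A.IsHermitian then ⨅ i, h.eigenvalues i else 0

open Classical in
/-- Largest eigenvalue of a symmetric matrix (junk value `0` otherwise). -/
def lamMax {ι : Type*} [Fintype ι] [DecidableEq ι] (A : Matrix ι ι ℝ) : ℝ :=
  if h : A.IsHermitian then ⨆ i, h.eigenvalues i else 0

variable {n k₁ k₂ : ℕ}

/-- First block of columns of the design matrix. -/
def X1 (X : Matrix (Fin n) (Fin k₁ ⊕ Fin k₂) ℝ) : Matrix (Fin n) (Fin k₁) ℝ :=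
  X.submatrix id Sum.inl

/-- Second block of columns of the design matrix. -/
def X2 (X : Matrix (Fin n) (Fin k₁ ⊕ Fin k₂) ℝ) : Matrix (Fin n) (Fin k₂) ℝ :=
  X.submatrix id Sum.inr

/-- Unrestricted least squares estimator. -/
def betaU (X : Matrix (Fin n) (Fin k₁ ⊕ Fin k₂) ℝ) (Y : Fin n → ℝ) : (Fin k₁ ⊕ Fin k₂) → ℝ :=
  (Xᵀ * X)⁻¹.mulVec (Xᵀ.mulVec Y)

/-- Restricted least squares estimator. -/
def betaR (X : Matrix (Fin n) (Fin k₁ ⊕ Fin k₂) ℝ) (Y : Fin n → ℝ) : (Fin k₁ ⊕ Fin k₂) → ℝ :=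
  Sum.elim (((X1 X)ᵀ * X1 X)⁻¹.mulVec ((X1 X)ᵀ.mulVec Y)) (fun _ => 0)

/-- Risk estimate of the restricted model. -/
def rR (X : Matrix (Fin n) (Fin k₁ ⊕ Fin k₂) ℝ) (σ2 : ℝ) (Y : Fin n → ℝ) : ℝ :=
  Y ⬝ᵥ Y - betaR X Y ⬝ᵥ (Xᵀ * X).mulVec (betaR X Y) + σ2 * (2 * k₁ - n)

/-- Risk estimate of the unrestricted model. -/
def rU (X : Matrix (Fin n) (Fin k₁ ⊕ Fin k₂) ℝ) (σ2 : ℝ) (Y : Fin n → ℝ) : ℝ :=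
  Y ⬝ᵥ Y - betaU X Y ⬝ᵥ (Xᵀ * X).mulVec (betaU X Y) + σ2 * (2 * (k₁ + k₂) - n)

/-- The model averaging weight `λ̂`. -/
def lamHat (α σ2 : ℝ) (X : Matrix (Fin n) (Fin k₁ ⊕ Fin k₂) ℝ) (Y : Fin n → ℝ) : ℝ :=
  Real.exp (-(α * rR X σ2 Y) / σ2) /
    (Real.exp (-(α * rR X σ2 Y) / σ2) + Real.exp (-(α * rU X σ2 Y) / σ2))

/-- Leung and Barron's model averaging estimator `β̃`. -/
def mavg (α σ2 : ℝ) (X : Matrix (Fin n) (Fin k₁ ⊕ Fin k₂) ℝ) (Y : Fin n → ℝ) :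
    (Fin k₁ ⊕ Fin k₂) → ℝ :=
  lamHat α σ2 X Y • betaR X Y + (1 - lamHat α σ2 X Y) • betaU X Y

/-- Projection on the column space of `X₁`. -/
def projR (X : Matrix (Fin n) (Fin k₁ ⊕ Fin k₂) ℝ) : Matrix (Fin n) (Fin n) ℝ :=
  X1 X * ((X1 X)ᵀ * X1 X)⁻¹ * (X1 X)ᵀ

/-- Projection on the column space of `X`. -/
def projU (X : Matrix (Fin n) (Fin k₁ ⊕ Fin k₂) ℝ) : Matrix (Fin n) (Fin n) ℝ :=
  X * (Xᵀ * X)⁻¹ * Xᵀ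

/-- The distribution `P_{n,β,σ}` of `Y = Xβ + u`, `u ~ N(0, σ² Iₙ)`. -/
def Pmeas (X : Matrix (Fin n) (Fin k₁ ⊕ Fin k₂) ℝ) (β : (Fin k₁ ⊕ Fin k₂) → ℝ) (σ2 : ℝ) :
    Measure (Fin n → ℝ) :=
  (gaussPi (Fin n) σ2).map (fun u => X.mulVec β + u)

/-- The function `h_{a,b}(ξ) = ξ / (1 + a exp(−ξ²/b))`. -/
def hfun (a b ξ : ℝ) : ℝ := ξ / (1 + a * Real.exp (-ξ ^ 2 / b))

/-- The inverse `g_{a,b}` of `h_{a,b}`. -/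
def gfun (a b : ℝ) : ℝ → ℝ := Function.invFun (hfun a b)

open Classical in
/-- `g(‖w‖) w / ‖w‖`, with the convention that this is `0` for `w = 0`. -/
def gdir (a b : ℝ) {ι : Type*} [Fintype ι] (w : ι → ℝ) : ι → ℝ :=
  if w = 0 then 0 else (gfun a b (enorm2 w) / enorm2 w) • w


/-- The finite-sample density `f_{n,β,σ}` of `√n(β̃ − β)` (Theorem 3 of the paper). -/
def fdens {n k₁ k₂ : ℕ} (X : Matrix (Fin n) (Fin k₁ ⊕ Fin k₂) ℝ)
    (β : (Fin k₁ ⊕ Fin k₂) → ℝ) (σ2 α : ℝ) (t : (Fin k₁ ⊕ Fin k₂) → ℝ) : ℝ :=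
  let a := Real.exp (2 * α * k₂)
  let b := σ2 / α
  let S := (X2 X)ᵀ * (1 - projR X) * X2 X
  let w := (Real.sqrt n)⁻¹ • (msqrt S).mulVec ((t ∘ Sum.inr) + Real.sqrt n • (β ∘ Sum.inr))
  (2 * π * σ2) ^ (-((k₁ : ℝ) + k₂) / 2) * Real.sqrt (((n : ℝ)⁻¹ • (Xᵀ * X)).det) *
    Real.exp (-(enorm2 ((Real.sqrt n)⁻¹ •
        ((msqrt ((X1 X)ᵀ * X1 X)).mulVec (t ∘ Sum.inl) +
          ((msqrt ((X1 X)ᵀ * X1 X))⁻¹ * (X1 X)ᵀ * X2 X).mulVec (t ∘ Sum.inr)))) ^ 2 /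
      (2 * σ2)) *
    (1 + Real.exp (-(α / σ2) * gfun a b (enorm2 w) ^ 2 + 2 * α * k₂)) ^ (k₂ : ℕ) *
    (1 + (2 * α / σ2) * gfun a b (enorm2 w) ^ 2 *
        (1 + Real.exp ((α / σ2) * gfun a b (enorm2 w) ^ 2 - 2 * α * k₂))⁻¹)⁻¹ *
    Real.exp (-(enorm2 (gdir a b w - (msqrt S).mulVec (β ∘ Sum.inr))) ^ 2 / (2 * σ2))

/-- The density `f_{∞,γ}` of the limiting distribution (formula (13) of the paper),
stated for a general symmetric positive definite matrix in place of `Q`. -/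
def fInfty {k₁ k₂ : ℕ} (Q : Matrix (Fin k₁ ⊕ Fin k₂) (Fin k₁ ⊕ Fin k₂) ℝ) (σ2 α : ℝ)
    (γ : Fin k₂ → ℝ) (t : (Fin k₁ ⊕ Fin k₂) → ℝ) : ℝ :=
  let a := Real.exp (2 * α * k₂)
  let b := σ2 / α
  let S := Q.toBlocks₂₂ - Q.toBlocks₂₁ * Q.toBlocks₁₁⁻¹ * Q.toBlocks₁₂
  let w := (msqrt S).mulVec ((t ∘ Sum.inr) + γ)
  (2 * π * σ2) ^ (-((k₁ : ℝ) + k₂) / 2) * Real.sqrt Q.det *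
    Real.exp (-(enorm2 ((msqrt Q.toBlocks₁₁).mulVec (t ∘ Sum.inl) +
        ((msqrt Q.toBlocks₁₁)⁻¹ * Q.toBlocks₁₂).mulVec (t ∘ Sum.inr))) ^ 2 / (2 * σ2)) *
    (1 + Real.exp (-(α / σ2) * gfun a b (enorm2 w) ^ 2 + 2 * α * k₂)) ^ (k₂ : ℕ) *
    (1 + (2 * α / σ2) * gfun a b (enorm2 w) ^ 2 *
        (1 + Real.exp ((α / σ2) * gfun a b (enorm2 w) ^ 2 - 2 * α * k₂))⁻¹)⁻¹ *
    Real.exp (-(enorm2 (gdir a b w - (msqrt S).mulVec γ)) ^ 2 / (2 * σ2))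


/-- The limiting law (12): the distribution of
`B_∞γ + C_∞Z₁ + [1 + exp(2αk₂) exp(−α‖Z₂ + (Q₂₂ − Q₂₁Q₁₁⁻¹Q₁₂)^{1/2}γ‖²/σ²)]⁻¹
  · (D_∞Z₂ − B_∞γ)` with `Z₁ ~ N(0, σ²I_{k₁})`, `Z₂ ~ N(0, σ²I_{k₂})` independent. -/
def limitLaw {k₁ k₂ : ℕ} (Q : Matrix (Fin k₁ ⊕ Fin k₂) (Fin k₁ ⊕ Fin k₂) ℝ) (σ2 α : ℝ)
    (γ : Fin k₂ → ℝ) : Measure ((Fin k₁ ⊕ Fin k₂) → ℝ) :=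
  ((gaussPi (Fin k₁) σ2).prod (gaussPi (Fin k₂) σ2)).map
    (fun Z : (Fin k₁ → ℝ) × (Fin k₂ → ℝ) =>
      (fromRows (Q.toBlocks₁₁⁻¹ * Q.toBlocks₁₂) (-1)).mulVec γ +
      (fromRows (msqrt Q.toBlocks₁₁)⁻¹ 0).mulVec Z.1 +
      (1 + Real.exp (2 * α * k₂) *
          Real.exp (-α * (enorm2 (Z.2 +
            (msqrt (Q.toBlocks₂₂ - Q.toBlocks₂₁ * Q.toBlocks₁₁⁻¹ * Q.toBlocks₁₂)).mulVec
              γ)) ^ 2 / σ2))⁻¹ •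
        ((fromRows
            (-(Q.toBlocks₁₁⁻¹ * Q.toBlocks₁₂ *
              (msqrt (Q.toBlocks₂₂ - Q.toBlocks₂₁ * Q.toBlocks₁₁⁻¹ * Q.toBlocks₁₂))⁻¹))
            ((msqrt (Q.toBlocks₂₂ - Q.toBlocks₂₁ * Q.toBlocks₁₁⁻¹ * Q.toBlocks₁₂))⁻¹)).mulVec
            Z.2 -
          (fromRows (Q.toBlocks₁₁⁻¹ * Q.toBlocks₁₂) (-1)).mulVec γ))


/-!
Write `D(s) = 1 + a exp(−s/b)`, so that `T x = D(‖x‖²)⁻¹ x` and `h ξ = ξ / D(ξ²)`. Then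
`‖T x‖ = h ‖x‖`, and `h (g r) = r` turns `g(‖w‖)/‖w‖` into `D(g(‖w‖)²)`, from which the inverse
formulas are immediate.

This also removes the singularity of `g(‖w‖) w/‖w‖` at `0`: it suffices that `w ↦ g(‖w‖)²` is
smooth. Now `k(s) = s / D(s)²` satisfies `k(g(‖w‖)²) = h(g(‖w‖))² = ‖w‖²`, which is smooth in `w`,
and `k' > 0` on `[0, ∞)`, so the one-dimensional inverse function theorem for `k` applies, at `0`
too.
-/

section InverseFunction

variable {𝕜 E F G : Type*} [RCLike 𝕜] [NormedAddCommGroup E] [NormedSpace 𝕜 E] [CompleteSpace E]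
  [NormedAddCommGroup F] [NormedSpace 𝕜 F] [NormedAddCommGroup G] [NormedSpace 𝕜 G]

lemma contDiffAt_of_comp {n : WithTop ℕ∞} {f : E → F} {f' : E ≃L[𝕜] F} {u : G → E} {x : G}
    (hf : ContDiffAt 𝕜 n f (u x)) (hf' : HasFDerivAt f (f' : E →L[𝕜] F) (u x)) (hn : n ≠ 0)
    (hu : ContinuousAt u x) (hfu : ContDiffAt 𝕜 n (f ∘ u) x) : ContDiffAt 𝕜 n u x := by
  have hinv : ∀ᶠ y in 𝓝 x, hf.localInverse hf' hn (f (u y)) = u y :=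
    hu.eventually (hf.hasStrictFDerivAt' hf' hn).eventually_left_inverse
  refine ContDiffAt.congr_of_eventuallyEq ?_ (hinv.mono fun _ hy => hy.symm)
  exact (hf.to_localInverse hf' hn).comp x hfu

end InverseFunction

section EuclideanNorm

variable {ι : Type*} [Fintype ι]

lemma enorm2_eq_norm (v : ι → ℝ) : enorm2 v = ‖WithLp.toLp 2 v‖ := by
  simp [enorm2, EuclideanSpace.norm_eq]

lemma enorm2_smul (c : ℝ) (v : ι → ℝ) : enorm2 (c • v) = |c| * enorm2 v := by
  simp [enorm2_eq_norm, norm_smul]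

lemma enorm2_eq_zero {v : ι → ℝ} : enorm2 v = 0 ↔ v = 0 := by
  simp [enorm2_eq_norm]

lemma continuous_enorm2 : Continuous (enorm2 : (ι → ℝ) → ℝ) := by
  unfold enorm2
  fun_prop

lemma contDiff_enorm2_sq {n : WithTop ℕ∞} : ContDiff ℝ n fun v : ι → ℝ => enorm2 v ^ 2 := by
  have enorm2_sq (v : ι → ℝ) : enorm2 v ^ 2 = ∑ i, v i ^ 2 :=
    Real.sq_sqrt (Finset.sum_nonneg fun i _ => sq_nonneg (v i))
  simp only [enorm2_sq]
  fun_prop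

end EuclideanNorm

section Damping

/-- The denominator `1 + a exp(−s/b)` of `h` and `T`. It is taken as a function of the squared norm
`s` because, unlike the norm, the squared norm is smooth at `0`. -/
def damping (a b s : ℝ) : ℝ := 1 + a * Real.exp (-s / b)

variable {a b : ℝ}

lemma damping_pos (ha : 0 ≤ a) (s : ℝ) : 0 < damping a b s := by
  unfold damping
  positivity

lemma antitone_damping (ha : 0 ≤ a) (hb : 0 < b) : Antitone (damping a b) := by
  intro s t hst
  unfold damping
  gcongr

lemma contDiff_damping {n : WithTop ℕ∞} : ContDiff ℝ n (damping a b) := by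
  unfold damping
  fun_prop

lemma hasDerivAt_damping (s : ℝ) :
    HasDerivAt (damping a b) (-(a / b * Real.exp (-s / b))) s := by
  refine ((((hasDerivAt_id s).neg.div_const b).exp.const_mul a).const_add 1).congr_deriv ?_
  simp only [Pi.neg_apply, id_eq]
  ring

end Damping

section Profile

variable {a b : ℝ}

lemma hfun_eq_div_damping (a b ξ : ℝ) : hfun a b ξ = ξ / damping a b (ξ ^ 2) := rfl

lemma hfun_neg (a b ξ : ℝ) : hfun a b (-ξ) = -hfun a b ξ := by
  simp only [hfun_eq_div_damping, neg_sq, neg_div]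

lemma strictMono_hfun (ha : 0 ≤ a) (hb : 0 < b) : StrictMono (hfun a b) := by
  refine strictMono_of_odd_strictMonoOn_nonneg (hfun_neg a b) fun ξ hξ η hη hlt => ?_
  rw [Set.mem_Ici] at hξ hη
  exact div_lt_div₀ hlt (antitone_damping ha hb (by gcongr)) hη (damping_pos ha _)

lemma continuous_hfun (ha : 0 ≤ a) : Continuous (hfun a b) :=
  continuous_id.div ((contDiff_damping (n := 0)).continuous.comp (continuous_pow 2))
    fun ξ => (damping_pos ha (ξ ^ 2)).ne'

lemma tendsto_hfun_atTop (ha : 0 ≤ a) (hb : 0 < b) : Tendsto (hfun a b) atTop atTop := by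
  have hpos : 0 < damping a b 0 := damping_pos ha 0
  refine tendsto_atTop_mono' _ ?_ (tendsto_id.atTop_div_const hpos)
  filter_upwards [eventually_ge_atTop 0] with ξ hξ
  exact div_le_div_of_nonneg_left hξ (damping_pos ha _) (antitone_damping ha hb (sq_nonneg ξ))

lemma tendsto_hfun_atBot (ha : 0 ≤ a) (hb : 0 < b) : Tendsto (hfun a b) atBot atBot := by
  have := tendsto_neg_atTop_atBot.comp ((tendsto_hfun_atTop ha hb).comp tendsto_neg_atBot_atTop)
  simpa only [Function.comp_def, hfun_neg, neg_neg] using this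

lemma surjective_hfun (ha : 0 ≤ a) (hb : 0 < b) : Function.Surjective (hfun a b) :=
  (continuous_hfun ha).surjective (tendsto_hfun_atTop ha hb) (tendsto_hfun_atBot ha hb)

lemma gfun_hfun (ha : 0 ≤ a) (hb : 0 < b) (ξ : ℝ) : gfun a b (hfun a b ξ) = ξ :=
  Function.leftInverse_invFun (strictMono_hfun ha hb).injective ξ

lemma hfun_gfun (ha : 0 ≤ a) (hb : 0 < b) (r : ℝ) : hfun a b (gfun a b r) = r :=
  Function.rightInverse_invFun (surjective_hfun ha hb) r

lemma gfun_eq_damping_mul (ha : 0 ≤ a) (hb : 0 < b) (r : ℝ) :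
    gfun a b r = damping a b (gfun a b r ^ 2) * r := by
  have h := hfun_gfun ha hb r
  rwa [hfun_eq_div_damping, div_eq_iff (damping_pos ha _).ne', mul_comm] at h

lemma continuous_gfun (ha : 0 ≤ a) (hb : 0 < b) : Continuous (gfun a b) := by
  have hmono : Monotone (gfun a b) := fun r s hrs => by
    rwa [← (strictMono_hfun ha hb).le_iff_le, hfun_gfun ha hb, hfun_gfun ha hb]
  exact hmono.continuous_of_surjective fun ξ => ⟨hfun a b ξ, gfun_hfun ha hb ξ⟩

end Profile

section SquaredProfile

/-- The function `k(s) = s / (1 + a exp(−s/b))²`, which is `h²` in the variable `s = ξ²`. -/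
def hfunSq (a b s : ℝ) : ℝ := s / damping a b s ^ 2

variable {a b : ℝ}

lemma hfunSq_sq (a b ξ : ℝ) : hfunSq a b (ξ ^ 2) = hfun a b ξ ^ 2 := by
  rw [hfunSq, hfun_eq_div_damping, div_pow]

lemma contDiff_hfunSq {n : WithTop ℕ∞} (ha : 0 ≤ a) : ContDiff ℝ n (hfunSq a b) :=
  contDiff_id.div (contDiff_damping.pow 2) fun s => pow_ne_zero 2 (damping_pos ha s).ne'

lemma hasDerivAt_hfunSq (ha : 0 ≤ a) (s : ℝ) :
    HasDerivAt (hfunSq a b)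
      ((damping a b s + 2 * s * (a / b * Real.exp (-s / b))) / damping a b s ^ 3) s := by
  have hD : damping a b s ≠ 0 := (damping_pos ha s).ne'
  refine ((hasDerivAt_id s).div ((hasDerivAt_damping s).pow 2) (pow_ne_zero 2 hD)).congr_deriv ?_
  simp only [Pi.pow_apply, id_eq]
  field_simp
  ring

lemma contDiffAt_of_hfunSq_comp {G : Type*} [NormedAddCommGroup G] [NormedSpace ℝ G]
    {n : WithTop ℕ∞} {u : G → ℝ} {x : G} (ha : 0 ≤ a) (hb : 0 < b) (hn : n ≠ 0) (hx : 0 ≤ u x)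
    (hu : ContinuousAt u x) (hku : ContDiffAt ℝ n (hfunSq a b ∘ u) x) : ContDiffAt ℝ n u x := by
  have hderiv_pos : 0 < (damping a b (u x) + 2 * u x * (a / b * Real.exp (-u x / b))) /
      damping a b (u x) ^ 3 := by
    have := damping_pos (b := b) ha (u x)
    positivity
  exact contDiffAt_of_comp (contDiff_hfunSq ha).contDiffAt
    ((hasDerivAt_hfunSq ha (u x)).hasFDerivAt_equiv hderiv_pos.ne') hn hu hku

end SquaredProfile

section RadialMap

open scoped ContDiff

/-- The map `T(x) = [1 + a exp(−‖x‖²/b)]⁻¹ x`. -/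
def radialMap (a b : ℝ) {ι : Type*} [Fintype ι] (x : ι → ℝ) : ι → ℝ :=
  (damping a b (enorm2 x ^ 2))⁻¹ • x

variable {a b : ℝ} {ι : Type*} [Fintype ι]

lemma enorm2_radialMap (ha : 0 ≤ a) (x : ι → ℝ) :
    enorm2 (radialMap a b x) = hfun a b (enorm2 x) := by
  rw [radialMap, enorm2_smul, abs_of_pos (inv_pos.2 (damping_pos ha _)), hfun_eq_div_damping,
    inv_mul_eq_div]

lemma gdir_eq_damping_smul (ha : 0 ≤ a) (hb : 0 < b) (w : ι → ℝ) :
    gdir a b w = damping a b (gfun a b (enorm2 w) ^ 2) • w := by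
  by_cases hw : w = 0
  · simp only [gdir, hw, if_true, smul_zero]
  · have hr : enorm2 w ≠ 0 := mt enorm2_eq_zero.1 hw
    rw [gdir, if_neg hw, div_eq_of_eq_mul hr (gfun_eq_damping_mul ha hb _)]

lemma enorm2_gdir (ha : 0 ≤ a) (hb : 0 < b) (w : ι → ℝ) :
    enorm2 (gdir a b w) = gfun a b (enorm2 w) := by
  rw [gdir_eq_damping_smul ha hb, enorm2_smul, abs_of_pos (damping_pos ha _),
    ← gfun_eq_damping_mul ha hb]

lemma radialMap_gdir (ha : 0 ≤ a) (hb : 0 < b) (y : ι → ℝ) : radialMap a b (gdir a b y) = y := by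
  rw [radialMap, enorm2_gdir ha hb, gdir_eq_damping_smul ha hb,
    inv_smul_smul₀ (damping_pos ha _).ne']

lemma gdir_radialMap (ha : 0 ≤ a) (hb : 0 < b) (x : ι → ℝ) : gdir a b (radialMap a b x) = x := by
  rw [gdir_eq_damping_smul ha hb, enorm2_radialMap ha, gfun_hfun ha hb, radialMap,
    smul_inv_smul₀ (damping_pos ha _).ne']

lemma bijective_radialMap (ha : 0 ≤ a) (hb : 0 < b) :
    Function.Bijective (radialMap a b : (ι → ℝ) → ι → ℝ) :=
  Function.bijective_iff_has_inverse.2 ⟨gdir a b, gdir_radialMap ha hb, radialMap_gdir ha hb⟩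

lemma contDiff_gfun_enorm2_sq (ha : 0 ≤ a) (hb : 0 < b) :
    ContDiff ℝ ω fun w : ι → ℝ => gfun a b (enorm2 w) ^ 2 := by
  refine contDiff_iff_contDiffAt.2 fun w =>
    contDiffAt_of_hfunSq_comp ha hb (by simp) (sq_nonneg _) ?_ ?_
  · exact (((continuous_gfun ha hb).comp continuous_enorm2).pow 2).continuousAt
  · simpa only [Function.comp_def, hfunSq_sq, hfun_gfun ha hb] using contDiff_enorm2_sq.contDiffAt

lemma contDiff_gdir (ha : 0 ≤ a) (hb : 0 < b) :
    ContDiff ℝ ω (gdir a b : (ι → ℝ) → ι → ℝ) := by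
  rw [funext (gdir_eq_damping_smul ha hb)]
  exact (contDiff_damping.comp (contDiff_gfun_enorm2_sq ha hb)).smul contDiff_id

theorem statement16_general (ha : 0 ≤ a) (hb : 0 < b) :
    Function.Bijective (radialMap a b : (ι → ℝ) → ι → ℝ) ∧
    (∀ y : ι → ℝ, radialMap a b (gdir a b y) = y) ∧
    (∀ x : ι → ℝ, gdir a b (radialMap a b x) = x) ∧
    ContDiff ℝ ω (gdir a b : (ι → ℝ) → ι → ℝ) ∧
    ∀ y : ι → ℝ, enorm2 (gdir a b y) = gfun a b (enorm2 y) :=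
  ⟨bijective_radialMap ha hb, radialMap_gdir ha hb, gdir_radialMap ha hb, contDiff_gdir ha hb,
    enorm2_gdir ha hb⟩

end RadialMap

/-- `T(x) = [1 + a exp(−‖x‖²/b)]⁻¹ x` is a bijection of `ℝ^m` with inverse
`T⁻¹(y) = g(‖y‖) y/‖y‖` (`= 0` for `y = 0`); moreover `T⁻¹` is continuously differentiable
and `‖T⁻¹(y)‖ = g(‖y‖)` for all `y`. -/
theorem statement16 (a b : ℝ) (ha : 0 < a) (hb : 0 < b) (m : ℕ) (hm : 0 < m) :
    Function.Bijective
      (fun x : Fin m → ℝ => (1 + a * Real.exp (-(enorm2 x) ^ 2 / b))⁻¹ • x) ∧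
    (∀ y : Fin m → ℝ,
      (fun x : Fin m → ℝ => (1 + a * Real.exp (-(enorm2 x) ^ 2 / b))⁻¹ • x) (gdir a b y) =
        y) ∧
    (∀ x : Fin m → ℝ,
      gdir a b ((fun x : Fin m → ℝ => (1 + a * Real.exp (-(enorm2 x) ^ 2 / b))⁻¹ • x) x) =
        x) ∧
    ContDiff ℝ 1 (gdir a b : (Fin m → ℝ) → (Fin m → ℝ)) ∧
    ∀ y : Fin m → ℝ, enorm2 (gdir a b y) = gfun a b (enorm2 y) := by
  obtain ⟨hT, hright, hleft, hsmooth, hnorm⟩ := statement16_general (ι := Fin m) ha.le hb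
  exact ⟨hT, hright, hleft, hsmooth.of_le le_top, hnorm⟩

end
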